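/- Let E be a real normed space, K ⊆ E a nontrivial cone with norm-base B_K, and A ⊆ E a nontrivial closed convex cone with norm-base B_A. Assume that cl S_{−K} is weakly compact. Then the following are equivalent: (1) cl S_A^0 ∩ cl S_{−K} = ∅; (2) there exists (x*, α) ∈ K^{aw#} with α > 0 such that x*(a) + α‖a‖ > 0 for all a ∈ A \ {0} and x*(k) + α‖k‖ < 0 for all k ∈ (−K) \ {0}; (3) there exists (x*, α) ∈ K^{aw#} such that x*(a) + α‖a‖ > 0 for all a ∈ A \ {0} and x*(k) + α‖k‖ < 0 for all k ∈ (−K) \ {0}; (4) A ∩ cl(conv(−K)) = {0} and 0 ∉ cl S_{−K}. Moreover, if additionally cl S_{cl(conv K)} is weakly compact, then these conditions are also equivalent to: (5) 0 ∉ cl S_{−K} and there exists a nonzero x* ∈ E* such that x*(a) ≥ 0 for all a ∈ A and x*(k) < 0 for all k ∈ (−cl(conv K)) \ {0}. -/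

import Mathlib

open Set

variable {E : Type*} [NormedAddCommGroup E] [NormedSpace ℝ E]

/-- `K` is a cone: contains `0` and is closed under nonnegative scalar multiplication. -/
def IsCone (K : Set E) : Prop :=
  (0 : E) ∈ K ∧ ∀ t : ℝ, 0 ≤ t → ∀ x ∈ K, t • x ∈ K

/-- A cone is nontrivial if it is neither `{0}` nor the whole space. -/
def IsNontrivialCone (K : Set E) : Prop :=
  IsCone K ∧ K ≠ {0} ∧ K ≠ Set.univ

/-- The norm-base of a cone: its intersection with the unit sphere. -/
def normBase (K : Set E) : Set E := {x ∈ K | ‖x‖ = 1}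

/-- Closure of a set with respect to the weak topology `σ(E, E*)`. -/
noncomputable def wClosure (S : Set E) : Set E :=
  (toWeakSpace ℝ E).symm '' closure ((toWeakSpace ℝ E) '' S)

/-- A set is weakly compact if it is compact in the weak topology `σ(E, E*)`. -/
def WeaklyCompact (S : Set E) : Prop :=
  IsCompact ((toWeakSpace ℝ E) '' S)

/-- A set is weakly closed if it equals its weak closure. -/
noncomputable def WeaklyClosed (S : Set E) : Prop :=
  wClosure S = S

/-- The (topological) dual cone `K⁺`. -/
def dualCone (K : Set E) : Set (E →L[ℝ] ℝ) :=
  {f | ∀ k ∈ K, 0 ≤ f k}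

/-- The set `K^#` of functionals strictly positive on `K \ {0}`. -/
def sharpCone (K : Set E) : Set (E →L[ℝ] ℝ) :=
  {f | ∀ k ∈ K, k ≠ 0 → 0 < f k}

/-- The set `K^{w#}` of functionals strictly positive on the weak closure of the norm-base. -/
noncomputable def wSharpCone (K : Set E) : Set (E →L[ℝ] ℝ) :=
  {f | ∀ x ∈ wClosure (normBase K), 0 < f x}

/-- The algebraic interior (core) of a set in a real vector space. -/
def core {X : Type*} [AddCommGroup X] [Module ℝ X] (Ω : Set X) : Set X :=
  {x ∈ Ω | ∀ v : X, ∃ ε > 0, ∀ t ∈ Set.Icc (0 : ℝ) ε, x + t • v ∈ Ω}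

/-- The augmented dual cone `K^{a+}`. -/
def augDualCone (K : Set E) : Set ((E →L[ℝ] ℝ) × ℝ) :=
  {p | 0 ≤ p.2 ∧ ∀ y ∈ K, 0 ≤ p.1 y - p.2 * ‖y‖}

/-- The set `K^{a#}`. -/
def augSharpCone (K : Set E) : Set ((E →L[ℝ] ℝ) × ℝ) :=
  {p | 0 ≤ p.2 ∧ p.1 ∈ sharpCone K ∧ ∀ y ∈ K, y ≠ 0 → 0 < p.1 y - p.2 * ‖y‖}

/-- The set `K^{aw#}`. -/
noncomputable def augWSharpCone (K : Set E) : Set ((E →L[ℝ] ℝ) × ℝ) :=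
  {p | 0 ≤ p.2 ∧ p.1 ∈ sharpCone K ∧ ∀ y ∈ wClosure (normBase K), p.2 < p.1 y}

/-- `S_C = conv(B_C)`. -/
noncomputable def convBase (C : Set E) : Set E := convexHull ℝ (normBase C)

/-- `S_C^0 = conv({0} ∪ B_C)`. -/
noncomputable def convBase0 (C : Set E) : Set E := convexHull ℝ ({0} ∪ normBase C)

/-!
Weak compactness lets Hahn–Banach separate `cl S_{-K}` strictly from the closed
convex set `cl S_A^0`, and it upgrades `f > α` on `cl_w B_K` to `f > α` on all of `cl S_K`, because
`f` attains its minimum on `cl_w B_K`. Hence a pair in `K^{aw#}` with `f + α‖·‖ > 0` on `A \ {0}`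
amounts to a functional separating `cl S_A^0` from `cl S_{-K}`: as `0 ∈ S_A^0`, the separating
level is negative, and it is `-α`.

Since `f - α‖·‖` is concave and continuous, its nonnegativity passes from `K` to `cl (conv K)`.
This gives `A ∩ cl (conv (-K)) = {0}`. It also shows that `0 ∉ cl S_K` implies
`0 ∉ cl S_{cl (conv K)}`, so when the latter base is weakly compact, its negative can be strictly
separated from the cone `A`; a functional bounded below on a cone is nonnegative there.
-/

section LinearFunctional

variable {X : Type*} [AddCommGroup X] [Module ℝ X] [TopologicalSpace X]

theorem le_apply_of_mem_closure_convexHull (f : X →L[ℝ] ℝ) {s : Set X} {c : ℝ}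
    (hf : ∀ x ∈ s, c ≤ f x) {x : X} (hx : x ∈ closure (convexHull ℝ s)) : c ≤ f x :=
  closure_minimal (t := {y | c ≤ f y})
    (convexHull_min hf (convex_halfSpace_ge f.toLinearMap.isLinear c))
    (isClosed_le continuous_const f.continuous) hx

end LinearFunctional

section WeakTopology

theorem subset_wClosure (s : Set E) : s ⊆ wClosure s := fun x hx =>
  ⟨toWeakSpace ℝ E x, subset_closure (mem_image_of_mem _ hx), (toWeakSpace ℝ E).symm_apply_apply x⟩

theorem wClosure_subset_closure_convexHull (s : Set E) :
    wClosure s ⊆ closure (convexHull ℝ s) := by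
  rintro _ ⟨y, hy, rfl⟩
  have hmem : y ∈ toWeakSpace ℝ E '' closure (convexHull ℝ s) := by
    rw [(convex_convexHull ℝ s).toWeakSpace_closure ℝ]
    exact closure_mono (image_mono (subset_convexHull ℝ s)) hy
  obtain ⟨x, hx, rfl⟩ := hmem
  rwa [LinearEquiv.symm_apply_apply]

namespace WeaklyCompact

variable {s t : Set E}

theorem neg (hs : WeaklyCompact s) : WeaklyCompact (-s) := by
  rw [WeaklyCompact, image_neg]
  exact IsCompact.neg hs

theorem wClosure_of_subset (ht : WeaklyCompact t) (hst : s ⊆ t) : WeaklyCompact (wClosure s) := by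
  rw [WeaklyCompact, wClosure, LinearEquiv.image_symm_eq_preimage,
    image_preimage_eq _ (toWeakSpace ℝ E).surjective]
  exact IsCompact.closure_of_subset ht (image_mono hst)

theorem exists_lt_forall_le_apply (hs : WeaklyCompact s) (f : E →L[ℝ] ℝ) {c : ℝ}
    (hf : ∀ x ∈ s, c < f x) : ∃ d, c < d ∧ ∀ x ∈ s, d ≤ f x := by
  have hcont : Continuous fun y : WeakSpace ℝ E => f ((toWeakSpace ℝ E).symm y) :=
    WeakBilin.eval_continuous (topDualPairing ℝ E).flip f
  obtain ⟨d, hcd, hd⟩ := IsCompact.exists_forall_le' hs hcont.continuousOn (a := c)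
    (by simpa using hf)
  exact ⟨d, hcd, by simpa using hd⟩

theorem exists_strict_separation (hs : WeaklyCompact s) (hsv : Convex ℝ s) (htv : Convex ℝ t)
    (htc : IsClosed t) (hst : Disjoint s t) :
    ∃ (f : E →L[ℝ] ℝ) (u v : ℝ), (∀ x ∈ s, f x < u) ∧ u < v ∧ ∀ x ∈ t, v < f x := by
  have htw : IsClosed (toWeakSpace ℝ E '' t) := by
    rw [← htc.closure_eq, htv.toWeakSpace_closure ℝ]
    exact isClosed_closure
  have : LocallyConvexSpace ℝ (WeakSpace ℝ E) :=
    inferInstanceAs (LocallyConvexSpace ℝ (WeakBilin (topDualPairing ℝ E).flip))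
  obtain ⟨f, u, v, hfs, huv, hft⟩ := geometric_hahn_banach_compact_closed
    (hsv.linear_image (toWeakSpace ℝ E).toLinearMap) hs
    (htv.linear_image (toWeakSpace ℝ E).toLinearMap) htw
    ((disjoint_image_iff (toWeakSpace ℝ E).injective).2 hst)
  exact ⟨f.comp (toWeakSpaceCLM ℝ E), u, v, fun x hx => hfs _ (mem_image_of_mem _ hx), huv,
    fun x hx => hft _ (mem_image_of_mem _ hx)⟩

end WeaklyCompact

end WeakTopology

section NormBase

variable {F : Type*} [NormedAddCommGroup F] (S : Set F) (C : Set E)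

theorem normBase_subset : normBase S ⊆ S := fun _ hx => hx.1

theorem normBase_neg : normBase (-S) = -normBase S := by
  ext x
  simp [normBase]

theorem normBase_subset_closure_convBase : normBase C ⊆ closure (convBase C) :=
  (subset_convexHull ℝ _).trans subset_closure

theorem normBase_subset_closure_convBase0 : normBase C ⊆ closure (convBase0 C) :=
  subset_union_right.trans ((subset_convexHull ℝ _).trans subset_closure)

theorem zero_mem_closure_convBase0 : (0 : E) ∈ closure (convBase0 C) :=
  subset_closure (subset_convexHull ℝ _ (mem_union_left _ rfl))

theorem closure_convBase_subset_closure_convexHull :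
    closure (convBase C) ⊆ closure (convexHull ℝ C) :=
  closure_mono (convexHull_mono (normBase_subset C))

theorem closure_convBase_neg : closure (convBase (-C)) = -closure (convBase C) := by
  rw [convBase, normBase_neg, convexHull_neg, neg_closure, convBase]

variable {C}

theorem weaklyCompact_closure_convBase_neg :
    WeaklyCompact (closure (convBase (-C))) ↔ WeaklyCompact (closure (convBase C)) := by
  rw [closure_convBase_neg]
  exact ⟨fun h => by simpa only [neg_neg] using h.neg, WeaklyCompact.neg⟩

theorem closure_convBase_subset (hCv : Convex ℝ C) (hCc : IsClosed C) :
    closure (convBase C) ⊆ C :=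
  closure_minimal (convexHull_min (normBase_subset C) hCv) hCc

theorem closure_convBase0_subset (h0 : (0 : E) ∈ C) (hCv : Convex ℝ C) (hCc : IsClosed C) :
    closure (convBase0 C) ⊆ C :=
  closure_minimal (convexHull_min
    (union_subset (singleton_subset_iff.2 h0) (normBase_subset C)) hCv) hCc

end NormBase

namespace IsCone

variable {C : Set E}

theorem neg (hC : IsCone C) : IsCone (-C) :=
  ⟨by simpa using hC.1, fun t ht x hx => by simpa using hC.2 t ht _ hx⟩

theorem closure_convexHull (hC : IsCone C) : IsCone (closure (convexHull ℝ C)) := by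
  refine ⟨subset_closure (subset_convexHull ℝ C hC.1), fun t ht x hx => ?_⟩
  have hmaps : MapsTo (t • ·) (convexHull ℝ C) (convexHull ℝ C) :=
    convexHull_min (fun z hz => subset_convexHull ℝ C (hC.2 t ht z hz))
      ((convex_convexHull ℝ C).linear_preimage (LinearMap.lsmul ℝ E t))
  exact hmaps.closure (continuous_const_smul t) hx

theorem inv_norm_smul_mem_normBase (hC : IsCone C) {x : E} (hx : x ∈ C) (hx0 : x ≠ 0) :
    ‖x‖⁻¹ • x ∈ normBase C :=
  ⟨hC.2 _ (inv_nonneg.2 (norm_nonneg x)) x hx, norm_smul_inv_norm (𝕜 := ℝ) hx0⟩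

theorem mul_norm_lt_apply (hC : IsCone C) (f : E →L[ℝ] ℝ) {c : ℝ}
    (hf : ∀ b ∈ normBase C, c < f b) {x : E} (hx : x ∈ C) (hx0 : x ≠ 0) : c * ‖x‖ < f x := by
  have hlt := hf _ (hC.inv_norm_smul_mem_normBase hx hx0)
  rwa [map_smul, smul_eq_mul, inv_mul_eq_div, lt_div_iff₀ (norm_pos_iff.2 hx0)] at hlt

theorem apply_nonneg_of_forall_lt (hC : IsCone C) (f : E →L[ℝ] ℝ) {c : ℝ}
    (hf : ∀ x ∈ C, c < f x) {x : E} (hx : x ∈ C) : 0 ≤ f x := by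
  by_contra! hneg
  have hc : c < 0 := by simpa using hf 0 hC.1
  have hlt := hf _ (hC.2 (c / f x) (div_nonneg_of_nonpos hc.le hneg.le) x hx)
  rw [map_smul, smul_eq_mul, div_mul_cancel₀ _ hneg.ne] at hlt
  exact lt_irrefl c hlt

end IsCone

section AugmentedDualCones

variable (K : Set E)

theorem augSharpCone_subset_augDualCone : augSharpCone K ⊆ augDualCone K := by
  rintro ⟨f, α⟩ ⟨hα, -, hf⟩
  refine ⟨hα, fun y hy => ?_⟩
  obtain rfl | hy0 := eq_or_ne y 0
  · simp
  · exact (hf y hy hy0).le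

theorem augDualCone_closure_convexHull :
    augDualCone (closure (convexHull ℝ K)) = augDualCone K := by
  refine Subset.antisymm
    (fun p hp => ⟨hp.1, fun y hy => hp.2 y (subset_closure (subset_convexHull ℝ K hy))⟩) ?_
  rintro ⟨f, α⟩ ⟨hα, hf⟩
  have hconc : ConcaveOn ℝ univ fun y => f y - α * ‖y‖ :=
    (f.toLinearMap.concaveOn convex_univ).sub ((convexOn_norm convex_univ).smul hα)
  have hconv : Convex ℝ {y | 0 ≤ f y - α * ‖y‖} := by simpa using hconc.convex_ge 0
  have hclosed : IsClosed {y | 0 ≤ f y - α * ‖y‖} := isClosed_le (by fun_prop) (by fun_prop)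
  exact ⟨hα, closure_minimal (convexHull_min hf hconv) hclosed⟩

variable {K} {f : E →L[ℝ] ℝ} {α : ℝ}

theorem augWSharpCone_subset_augSharpCone (hK : IsCone K) : augWSharpCone K ⊆ augSharpCone K :=
  fun p ⟨hα, hsharp, hf⟩ => ⟨hα, hsharp, fun _ hy hy0 =>
    sub_pos.2 (hK.mul_norm_lt_apply p.1 (fun b hb => hf b (subset_wClosure _ hb)) hy hy0)⟩

theorem apply_add_mul_norm_neg_of_mem_augSharpCone (hf : (f, α) ∈ augSharpCone K) {k : E}
    (hk : k ∈ -K) (hk0 : k ≠ 0) : f k + α * ‖k‖ < 0 := by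
  have hpos : 0 < f (-k) - α * ‖-k‖ := hf.2.2 (-k) hk (neg_ne_zero.2 hk0)
  rw [map_neg, norm_neg] at hpos
  linarith

theorem le_apply_of_mem_closure_convBase (hf : (f, α) ∈ augDualCone K) {x : E}
    (hx : x ∈ closure (convBase K)) : α ≤ f x := by
  refine le_apply_of_mem_closure_convexHull f (fun b hb => ?_) hx
  simpa [hb.2] using hf.2 b hb.1

theorem mem_augWSharpCone_iff (hK : IsCone K) (hcomp : WeaklyCompact (closure (convBase K))) :
    (f, α) ∈ augWSharpCone K ↔ 0 ≤ α ∧ ∀ x ∈ closure (convBase K), α < f x := by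
  constructor
  · rintro ⟨hα, -, hf⟩
    obtain ⟨d, hαd, hd⟩ :=
      (hcomp.wClosure_of_subset (normBase_subset_closure_convBase K)).exists_lt_forall_le_apply f hf
    exact ⟨hα, fun x hx => hαd.trans_le <|
      le_apply_of_mem_closure_convexHull f (fun b hb => hd b (subset_wClosure _ hb)) hx⟩
  · rintro ⟨hα, hf⟩
    have hbase : ∀ b ∈ normBase K, α < f b := fun b hb =>
      hf b (normBase_subset_closure_convBase K hb)
    exact ⟨hα, fun k hk hk0 =>
      (mul_nonneg hα (norm_nonneg k)).trans_lt (hK.mul_norm_lt_apply f hbase hk hk0),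
      fun y hy => hf y (wClosure_subset_closure_convexHull _ hy)⟩

theorem zero_notMem_closure_convBase_closure_convexHull (hK : IsCone K)
    (hcomp : WeaklyCompact (closure (convBase K))) (h0 : (0 : E) ∉ closure (convBase K)) :
    (0 : E) ∉ closure (convBase (closure (convexHull ℝ K))) := by
  obtain ⟨f, u, v, hfK, huv, hf0⟩ := hcomp.exists_strict_separation (convex_convexHull ℝ _).closure
    (convex_singleton 0) isClosed_singleton (disjoint_singleton_right.2 h0)
  have hu : 0 < -u := neg_pos.2 (huv.trans (by simpa using hf0))
  have hmem : (-f, -u) ∈ augWSharpCone K :=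
    (mem_augWSharpCone_iff hK hcomp).2 ⟨hu.le, fun x hx => neg_lt_neg (hfK x hx)⟩
  have hdual : (-f, -u) ∈ augDualCone (closure (convexHull ℝ K)) := by
    rw [augDualCone_closure_convexHull]
    exact augSharpCone_subset_augDualCone K (augWSharpCone_subset_augSharpCone hK hmem)
  intro hmem0
  exact hu.not_ge (by simpa using le_apply_of_mem_closure_convBase hdual hmem0)

end AugmentedDualCones

section ConeSeparation

variable {K A C : Set E}

theorem exists_mem_augWSharpCone_of_disjoint (hK : IsCone K) (hA : IsCone A)
    (hcomp : WeaklyCompact (closure (convBase K)))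
    (hdisj : Disjoint (closure (convBase0 A)) (closure (convBase (-K)))) :
    ∃ (f : E →L[ℝ] ℝ) (α : ℝ), (f, α) ∈ augWSharpCone K ∧ 0 < α ∧
      (∀ a ∈ A, a ≠ 0 → 0 < f a + α * ‖a‖) ∧ ∀ k ∈ -K, k ≠ 0 → f k + α * ‖k‖ < 0 := by
  obtain ⟨f, u, v, hfK, huv, hfA⟩ :=
    (weaklyCompact_closure_convBase_neg.2 hcomp).exists_strict_separation
      (convex_convexHull ℝ _).closure (convex_convexHull ℝ _).closure isClosed_closure hdisj.symm
  have hv : v < 0 := by simpa using hfA 0 (zero_mem_closure_convBase0 A)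
  have hmem : (f, -v) ∈ augWSharpCone K := by
    refine (mem_augWSharpCone_iff hK hcomp).2 ⟨(neg_pos.2 hv).le, fun x hx => ?_⟩
    have hlt : f (-x) < u := hfK (-x) (by simpa [closure_convBase_neg] using hx)
    rw [map_neg] at hlt
    linarith
  refine ⟨f, -v, hmem, neg_pos.2 hv, fun a ha ha0 => ?_, fun k => ?_⟩
  · have hlt : v * ‖a‖ < f a :=
      hA.mul_norm_lt_apply f (fun b hb => hfA b (normBase_subset_closure_convBase0 A hb)) ha ha0
    linarith
  · exact apply_add_mul_norm_neg_of_mem_augSharpCone (augWSharpCone_subset_augSharpCone hK hmem)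

theorem disjoint_of_mem_augWSharpCone (hK : IsCone K)
    (hcomp : WeaklyCompact (closure (convBase K))) {f : E →L[ℝ] ℝ} {α : ℝ}
    (hf : (f, α) ∈ augWSharpCone K) (hfA : ∀ a ∈ A, a ≠ 0 → 0 < f a + α * ‖a‖) :
    Disjoint (closure (convBase0 A)) (closure (convBase (-K))) := by
  obtain ⟨hα, hfK⟩ := (mem_augWSharpCone_iff hK hcomp).1 hf
  rw [disjoint_left]
  intro x hxA hxK
  have hlow : -α ≤ f x := by
    refine le_apply_of_mem_closure_convexHull f ?_ hxA
    rintro b (rfl | ⟨hbA, hb⟩)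
    · simpa using hα
    · have hpos := hfA b hbA (norm_ne_zero_iff.1 (hb ▸ one_ne_zero))
      rw [hb] at hpos
      linarith
  have hup : α < f (-x) := hfK (-x) (by simpa [closure_convBase_neg] using hxK)
  rw [map_neg] at hup
  linarith

theorem inter_neg_closure_convexHull_eq_singleton_zero (hK : (0 : E) ∈ K) (hA : (0 : E) ∈ A)
    {f : E →L[ℝ] ℝ} {α : ℝ} (hf : (f, α) ∈ augDualCone K)
    (hfA : ∀ a ∈ A, a ≠ 0 → 0 < f a + α * ‖a‖) : A ∩ -closure (convexHull ℝ K) = {0} := by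
  rw [← augDualCone_closure_convexHull] at hf
  have hzero : (0 : E) ∈ A ∩ -closure (convexHull ℝ K) :=
    ⟨hA, by simpa using subset_closure (subset_convexHull ℝ K hK)⟩
  refine Subset.antisymm (fun x hx => ?_) (singleton_subset_iff.2 hzero)
  by_contra hx0
  have hnonneg : 0 ≤ f (-x) - α * ‖-x‖ := hf.2 (-x) hx.2
  rw [map_neg, norm_neg] at hnonneg
  linarith [hfA x hx.1 hx0]

theorem disjoint_closure_convBase0_of_inter_subset (hA0 : (0 : E) ∈ A) (hAv : Convex ℝ A)
    (hAc : IsClosed A) (hinter : A ∩ closure (convexHull ℝ C) ⊆ {0})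
    (h0 : (0 : E) ∉ closure (convBase C)) :
    Disjoint (closure (convBase0 A)) (closure (convBase C)) := by
  rw [disjoint_left]
  intro x hxA hxC
  have hx : x = 0 := hinter
    ⟨closure_convBase0_subset hA0 hAv hAc hxA, closure_convBase_subset_closure_convexHull C hxC⟩
  exact h0 (hx ▸ hxC)

theorem disjoint_closure_convBase0_iff (hK : IsCone K) (hA : IsCone A) (hAv : Convex ℝ A)
    (hAc : IsClosed A) (hcomp : WeaklyCompact (closure (convBase K))) :
    Disjoint (closure (convBase0 A)) (closure (convBase (-K))) ↔
      A ∩ closure (convexHull ℝ (-K)) = {0} ∧ (0 : E) ∉ closure (convBase (-K)) := by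
  refine ⟨fun hdisj => ⟨?_, disjoint_left.1 hdisj (zero_mem_closure_convBase0 A)⟩,
    fun ⟨hinter, h0⟩ => disjoint_closure_convBase0_of_inter_subset hA.1 hAv hAc hinter.subset h0⟩
  obtain ⟨f, α, hf, -, hfA, -⟩ := exists_mem_augWSharpCone_of_disjoint hK hA hcomp hdisj
  rw [convexHull_neg, ← neg_closure]
  exact inter_neg_closure_convexHull_eq_singleton_zero hK.1 hA.1
    (augSharpCone_subset_augDualCone K (augWSharpCone_subset_augSharpCone hK hf)) hfA

theorem inter_eq_singleton_zero_iff_exists_nonneg_neg (hA : IsCone A) (hAv : Convex ℝ A)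
    (hAc : IsClosed A) (hC : IsCone C) (hCv : Convex ℝ C) (hCc : IsClosed C) (hCne : C.Nontrivial)
    (hcomp : WeaklyCompact (closure (convBase C))) (h0 : (0 : E) ∉ closure (convBase C)) :
    A ∩ C = {0} ↔ ∃ f : E →L[ℝ] ℝ, f ≠ 0 ∧ (∀ a ∈ A, 0 ≤ f a) ∧ ∀ c ∈ C, c ≠ 0 → f c < 0 := by
  constructor
  · intro hinter
    have hdisj : Disjoint (closure (convBase C)) A := by
      rw [disjoint_left]
      intro x hxC hxA
      have hx : x ∈ ({0} : Set E) := hinter ▸ ⟨hxA, closure_convBase_subset hCv hCc hxC⟩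
      exact h0 (mem_singleton_iff.1 hx ▸ hxC)
    obtain ⟨f, u, v, hfC, huv, hfA⟩ :=
      hcomp.exists_strict_separation (convex_convexHull ℝ _).closure hAv hAc hdisj
    have hv : v < 0 := by simpa using hfA 0 hA.1
    have hneg : ∀ c ∈ C, c ≠ 0 → f c < 0 := fun c hc hc0 => by
      have hpos : 0 * ‖c‖ < (-f) c := hC.mul_norm_lt_apply (-f) (fun b hb => neg_pos.2 <|
        (hfC b (normBase_subset_closure_convBase C hb)).trans (huv.trans hv)) hc hc0
      simpa using hpos
    obtain ⟨c, hc, hc0⟩ := hCne.exists_ne 0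
    refine ⟨f, ?_, fun a ha => hA.apply_nonneg_of_forall_lt f hfA ha, hneg⟩
    rintro rfl
    exact lt_irrefl 0 (hneg c hc hc0)
  · rintro ⟨f, -, hfA, hfC⟩
    refine Subset.antisymm (fun x hx => ?_) (singleton_subset_iff.2 ⟨hA.1, hC.1⟩)
    by_contra hx0
    exact (hfA x hx.1).not_gt (hfC x hx.2 hx0)

end ConeSeparation

theorem stmt18 (K A : Set E) (hK : IsNontrivialCone K) (hA : IsNontrivialCone A)
    (hAcl : IsClosed A) (hAcv : Convex ℝ A)
    (hcomp : WeaklyCompact (closure (convBase (-K)))) :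
    ((closure (convBase0 A) ∩ closure (convBase (-K)) = ∅) ↔
      (∃ f : E →L[ℝ] ℝ, ∃ α : ℝ, (f, α) ∈ augWSharpCone K ∧ 0 < α ∧
        (∀ a ∈ A, a ≠ 0 → 0 < f a + α * ‖a‖) ∧
        (∀ k ∈ (-K : Set E), k ≠ 0 → f k + α * ‖k‖ < 0))) ∧
    ((closure (convBase0 A) ∩ closure (convBase (-K)) = ∅) ↔
      (∃ f : E →L[ℝ] ℝ, ∃ α : ℝ, (f, α) ∈ augWSharpCone K ∧
        (∀ a ∈ A, a ≠ 0 → 0 < f a + α * ‖a‖) ∧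
        (∀ k ∈ (-K : Set E), k ≠ 0 → f k + α * ‖k‖ < 0))) ∧
    ((closure (convBase0 A) ∩ closure (convBase (-K)) = ∅) ↔
      (A ∩ closure (convexHull ℝ (-K)) = {0} ∧ (0 : E) ∉ closure (convBase (-K)))) ∧
    (WeaklyCompact (closure (convBase (closure (convexHull ℝ K)))) →
      ((closure (convBase0 A) ∩ closure (convBase (-K)) = ∅) ↔
        ((0 : E) ∉ closure (convBase (-K)) ∧
          ∃ f : E →L[ℝ] ℝ, f ≠ 0 ∧ (∀ a ∈ A, 0 ≤ f a) ∧
            ∀ k ∈ -(closure (convexHull ℝ K)), k ≠ 0 → f k < 0))) := by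
  have hKc : IsCone K := hK.1
  have hcompK : WeaklyCompact (closure (convBase K)) := weaklyCompact_closure_convBase_neg.1 hcomp
  rw [← disjoint_iff_inter_eq_empty]
  have h12 := exists_mem_augWSharpCone_of_disjoint hKc hA.1 hcompK
  have h14 := disjoint_closure_convBase0_iff hKc hA.1 hAcv hAcl hcompK
  refine ⟨⟨h12, fun ⟨f, α, hf, _, hfA, _⟩ => disjoint_of_mem_augWSharpCone hKc hcompK hf hfA⟩,
    ⟨fun h => ?_, fun ⟨f, α, hf, hfA, _⟩ => disjoint_of_mem_augWSharpCone hKc hcompK hf hfA⟩,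
    h14, fun hcompQ => ?_⟩
  · obtain ⟨f, α, hf, -, hsep⟩ := h12 h
    exact ⟨f, α, hf, hsep⟩
  · have hKne : K.Nontrivial := (nontrivial_iff_ne_singleton hKc.1).2 hK.2.1
    rw [h14, and_comm, convexHull_neg, ← neg_closure]
    refine and_congr_right fun h0 => inter_eq_singleton_zero_iff_exists_nonneg_neg hA.1 hAcv hAcl
      hKc.closure_convexHull.neg (convex_convexHull ℝ K).closure.neg isClosed_closure.neg
      ?_ (weaklyCompact_closure_convBase_neg.2 hcompQ) ?_
    · exact (hKne.mono ((subset_convexHull ℝ K).trans subset_closure)).preimage neg_surjective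
    · rw [closure_convBase_neg, mem_neg, neg_zero] at h0 ⊢
      exact zero_notMem_closure_convBase_closure_convexHull hKc hcompK h0
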